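/- arXiv:math/0608206 — 4 statements merged into one kernel-verified Lean document; each statement's English description precedes it below -/
import Mathlib

section
/- Let m ≥ 1 and let G be a cyclic group of order m. Then for every s with Re s > 1, Z_P(s) = ∏_{n | m} ζ_{P_n}(ns)^{m/n}, where the product is over the positive divisors n of m; in particular all the infinite products involved converge. -/
/-!
For `g : G` of order `n`, evaluation at `g` maps the dual group of `G` onto the `n`-th roots of
unity, because characters separate the points of `G`; each root is attained `|G| / n` times. Since
`1 - x ^ n` is the product of the `1 - ζ x` over the `n`-th roots of unity `ζ`, the Euler factors at
`p` of the `L_P(s, ρ)` multiply to `(1 - N(p) ^ (-n s))⁻¹ ^ (|G| / n)` with `n = ord (φ p)`. As all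
products converge, the result may be grouped according to the value of `ord (φ p)`.
-/

section CharacterValues

variable {G M : Type*} [CommGroup G] [Finite G] [CommMonoid M]
  [HasEnoughRootsOfUnity M (Monoid.exponent G)]

theorem range_monoidHom_eval_eq_rootsOfUnity (g : G) :
    (MonoidHom.eval g : (G →* Mˣ) →* Mˣ).range = rootsOfUnity (orderOf g) M := by
  have : NeZero (orderOf g) := ⟨(orderOf_pos g).ne'⟩
  have : HasEnoughRootsOfUnity M (orderOf g) := .of_dvd M (Monoid.order_dvd_exponent g)
  let H := (MonoidHom.eval g : (G →* Mˣ) →* Mˣ).range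
  have : Finite H := Finite.of_surjective _ (MonoidHom.rangeRestrict_surjective _)
  have le_rootsOfUnity : H ≤ rootsOfUnity (orderOf g) M := by
    rintro _ ⟨ρ, rfl⟩
    rw [mem_rootsOfUnity, MonoidHom.eval_apply_apply, ← map_pow, pow_orderOf_eq_one, map_one]
  have apply_pow_card (ρ : G →* Mˣ) : ρ (g ^ Nat.card H) = ρ 1 := by
    rw [map_pow, map_one]
    exact orderOf_dvd_iff_pow_eq_one.1 (H.orderOf_dvd_natCard ⟨ρ, rfl⟩)
  have orderOf_dvd_card : orderOf g ∣ Nat.card H :=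
    orderOf_dvd_of_pow_eq_one ((CommGroup.forall_apply_eq_apply_iff G).1 apply_pow_card)
  exact Subgroup.eq_of_le_of_card_ge le_rootsOfUnity
    ((HasEnoughRootsOfUnity.natCard_rootsOfUnity M _).trans_le
      (Nat.le_of_dvd Nat.card_pos orderOf_dvd_card))

theorem natCard_ker_monoidHom_eval (g : G) :
    Nat.card (MonoidHom.eval g : (G →* Mˣ) →* Mˣ).ker = Nat.card G / orderOf g := by
  have : NeZero (orderOf g) := ⟨(orderOf_pos g).ne'⟩
  have : HasEnoughRootsOfUnity M (orderOf g) := .of_dvd M (Monoid.order_dvd_exponent g)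
  have card_mul := (MonoidHom.eval g : (G →* Mˣ) →* Mˣ).ker.card_mul_index
  rw [Subgroup.index_ker, range_monoidHom_eval_eq_rootsOfUnity,
    HasEnoughRootsOfUnity.natCard_rootsOfUnity,
    CommGroup.card_monoidHom_of_hasEnoughRootsOfUnity] at card_mul
  exact (Nat.div_eq_of_eq_mul_left (orderOf_pos g) card_mul.symm).symm

open Finset in
theorem card_monoidHom_apply_eq [Fintype (G →* Mˣ)] [DecidableEq M] {g : G} {ζ : M}
    (hζ : ζ ^ orderOf g = 1) :
    #{ρ : G →* Mˣ | (ρ g : M) = ζ} = Nat.card G / orderOf g := by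
  classical
  let evalHom : (G →* Mˣ) →* Mˣ := MonoidHom.eval g
  obtain ⟨u, rfl⟩ : IsUnit ζ := .of_pow_eq_one hζ (orderOf_pos g).ne'
  have mem_range : u ∈ Set.range evalHom := by
    rw [← MonoidHom.coe_range, range_monoidHom_eval_eq_rootsOfUnity]
    exact (mem_rootsOfUnity' _ _).2 hζ
  calc #{ρ : G →* Mˣ | (ρ g : M) = u}
      = #{ρ | evalHom ρ = u} := by simp only [Units.val_inj, evalHom, MonoidHom.eval_apply_apply]
    _ = #{ρ | evalHom ρ = 1} :=
        MonoidHom.card_fiber_eq_of_mem_range evalHom mem_range ⟨1, map_one _⟩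
    _ = Nat.card evalHom.ker := (Nat.subtype_card _ (by simp [MonoidHom.mem_ker])).symm
    _ = Nat.card G / orderOf g := natCard_ker_monoidHom_eval g

theorem prod_monoidHom_one_sub_apply_mul {R : Type*} [CommRing R] [IsDomain R]
    [HasEnoughRootsOfUnity R (Monoid.exponent G)] [Fintype (G →* Rˣ)] (g : G) (x : R) :
    ∏ ρ : G →* Rˣ, (1 - (ρ g : R) * x) = (1 - x ^ orderOf g) ^ (Nat.card G / orderOf g) := by
  classical
  have hpos := orderOf_pos g
  have : HasEnoughRootsOfUnity R (orderOf g) := .of_dvd R (Monoid.order_dvd_exponent g)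
  obtain ⟨ζ₀, hζ₀⟩ := HasEnoughRootsOfUnity.exists_primitiveRoot R (orderOf g)
  have apply_mem : ∀ ρ ∈ (Finset.univ : Finset (G →* Rˣ)),
      (ρ g : R) ∈ Polynomial.nthRootsFinset (orderOf g) (1 : R) := fun ρ _ => by
    rw [Polynomial.mem_nthRootsFinset hpos, ← Units.val_pow_eq_pow_val, ← map_pow,
      pow_orderOf_eq_one, map_one, Units.val_one]
  calc ∏ ρ : G →* Rˣ, (1 - (ρ g : R) * x)
      = ∏ ζ ∈ Polynomial.nthRootsFinset (orderOf g) (1 : R),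
          ∏ ρ : G →* Rˣ with (ρ g : R) = ζ, (1 - ζ * x) :=
        (Finset.prod_fiberwise_of_maps_to' apply_mem fun ζ => 1 - ζ * x).symm
    _ = ∏ ζ ∈ Polynomial.nthRootsFinset (orderOf g) (1 : R),
          (1 - ζ * x) ^ (Nat.card G / orderOf g) :=
        Finset.prod_congr rfl fun ζ hζ => by
          rw [Finset.prod_const,
            card_monoidHom_apply_eq ((Polynomial.mem_nthRootsFinset hpos _).1 hζ)]
    _ = (1 - x ^ orderOf g) ^ (Nat.card G / orderOf g) := by
        rw [Finset.prod_pow, ← hζ₀.pow_sub_pow_eq_prod_sub_mul 1 x hpos, one_pow]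

end CharacterValues

theorem tprod_eq_prod_tprod_fiber {ι κ α : Type*} [CommMonoid α] [TopologicalSpace α]
    [ContinuousMul α] [T2Space α] {a : ι → α} {f : ι → κ} {s : Finset κ} (hf : ∀ i, f i ∈ s)
    (ha : ∀ k ∈ s, Multipliable fun i : {i // f i = k} => a i) :
    ∏' i, a i = ∏ k ∈ s, ∏' i : {i // f i = k}, a i := by
  have iUnion_fiber : ⋃ k ∈ s, {i | f i = k} = Set.univ := by
    ext i
    simpa using hf i
  have disjoint_fiber : (s : Set κ).Pairwise (Function.onFun Disjoint fun k => {i | f i = k}) :=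
    fun k _ l _ hkl => Set.disjoint_left.2 fun i hk hl => hkl (hk.symm.trans hl)
  rw [← tprod_univ, ← iUnion_fiber]
  exact Multipliable.tprod_finset_bUnion_disjoint disjoint_fiber ha

theorem norm_monoidHom_apply {G R : Type*} [Group G] [Finite G] [NormedRing R] [NormMulClass R]
    [NormOneClass R] (ρ : G →* Rˣ) (g : G) : ‖(ρ g : R)‖ = 1 :=
  ((Units.coeHom R).isOfFinOrder (ρ.isOfFinOrder (isOfFinOrder_of_finite g))).norm_eq_one

section EulerProduct

variable {ι K : Type*} [NormedField K] [CompleteSpace K]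

theorem multipliable_inv_one_sub_of_summable_norm {a : ι → K} (ha : ∀ i, a i ≠ 1)
    (hsum : Summable fun i => ‖a i‖) : Multipliable fun i => (1 - a i)⁻¹ := by
  have hsum_neg : Summable fun i => ‖-a i‖ := by simpa only [norm_neg] using hsum
  have hne (i) : 1 + -a i ≠ 0 := by simpa only [← sub_eq_add_neg, sub_ne_zero] using (ha i).symm
  simpa only [← sub_eq_add_neg] using (multipliable_one_add_of_summable hsum_neg).inv₀
    (tprod_one_add_ne_zero_of_summable hne hsum_neg)

variable {x : ι → K}

theorem multipliable_inv_one_sub_of_norm_le {a : ι → K} (hax : ∀ i, ‖a i‖ ≤ ‖x i‖)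
    (hx : ∀ i, ‖x i‖ < 1) (hsum : Summable fun i => ‖x i‖) :
    Multipliable fun i => (1 - a i)⁻¹ := by
  have ha (i) : a i ≠ 1 := fun h => by simpa [h] using (hax i).trans_lt (hx i)
  exact multipliable_inv_one_sub_of_summable_norm ha
    (hsum.of_nonneg_of_le (fun _ => norm_nonneg _) hax)

theorem multipliable_inv_one_sub_mul {c : ι → K} (hc : ∀ i, ‖c i‖ ≤ 1) (hx : ∀ i, ‖x i‖ < 1)
    (hsum : Summable fun i => ‖x i‖) : Multipliable fun i => (1 - c i * x i)⁻¹ := by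
  refine multipliable_inv_one_sub_of_norm_le (fun i => ?_) hx hsum
  simpa only [norm_mul] using mul_le_of_le_one_left (norm_nonneg _) (hc i)

theorem multipliable_inv_one_sub_pow {n : ℕ} (hn : n ≠ 0) (hx : ∀ i, ‖x i‖ < 1)
    (hsum : Summable fun i => ‖x i‖) : Multipliable fun i => (1 - x i ^ n)⁻¹ := by
  refine multipliable_inv_one_sub_of_norm_le (fun i => ?_) hx hsum
  simpa only [norm_pow] using pow_le_of_le_one (norm_nonneg _) (hx i).le hn

theorem tprod_monoidHom_tprod_inv_one_sub {G : Type*} [CommGroup G] [Finite G]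
    [HasEnoughRootsOfUnity K (Monoid.exponent G)] (φ : ι → G) (hx : ∀ i, ‖x i‖ < 1)
    (hsum : Summable fun i => ‖x i‖) :
    ∏' ρ : G →* Kˣ, ∏' i, (1 - (ρ (φ i) : K) * x i)⁻¹ =
      ∏ n ∈ (Nat.card G).divisors,
        (∏' i : {i // orderOf (φ i) = n}, (1 - x i ^ n)⁻¹) ^ (Nat.card G / n) := by
  have : Fintype (G →* Kˣ) := Fintype.ofFinite _
  have orderOf_mem (i) : orderOf (φ i) ∈ (Nat.card G).divisors :=
    Nat.mem_divisors.2 ⟨orderOf_dvd_natCard _, Nat.card_pos.ne'⟩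
  have hfiber : ∀ n ∈ (Nat.card G).divisors,
      Multipliable fun i : {i // orderOf (φ i) = n} => (1 - x i ^ n)⁻¹ := fun n hn =>
    multipliable_inv_one_sub_pow (Nat.pos_of_mem_divisors hn).ne' (fun i => hx i)
      (hsum.subtype _)
  calc ∏' ρ : G →* Kˣ, ∏' i, (1 - (ρ (φ i) : K) * x i)⁻¹
      = ∏' i, ∏ ρ : G →* Kˣ, (1 - (ρ (φ i) : K) * x i)⁻¹ := by
        rw [tprod_fintype, Multipliable.tprod_finsetProd fun ρ _ =>
          multipliable_inv_one_sub_mul (fun i => (norm_monoidHom_apply ρ (φ i)).le) hx hsum]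
    _ = ∏' i, (1 - x i ^ orderOf (φ i))⁻¹ ^ (Nat.card G / orderOf (φ i)) := by
        simp only [Finset.prod_inv_distrib, prod_monoidHom_one_sub_apply_mul, inv_pow]
    _ = ∏ n ∈ (Nat.card G).divisors, ∏' i : {i // orderOf (φ i) = n},
          (1 - x i ^ orderOf (φ i))⁻¹ ^ (Nat.card G / orderOf (φ i)) := by
        refine tprod_eq_prod_tprod_fiber orderOf_mem fun n hn => ?_
        exact ((hfiber n hn).pow (Nat.card G / n)).congr fun i => by rw [i.2]
    _ = ∏ n ∈ (Nat.card G).divisors,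
          (∏' i : {i // orderOf (φ i) = n}, (1 - x i ^ n)⁻¹) ^ (Nat.card G / n) := by
        refine Finset.prod_congr rfl fun n hn => ?_
        rw [← (hfiber n hn).tprod_pow]
        exact tprod_congr fun i => by rw [i.2]

end EulerProduct

theorem ZP_eq_prod_zetaPn_general {P : Type*} (N : P → ℝ) (hN : ∀ p, 1 < N p)
    {G : Type*} [CommGroup G] [Finite G] (φ : P → G) (s : ℂ) (hs : 0 < s.re)
    (hsum : Summable fun p => N p ^ (-s.re)) :
    (∀ ρ : G →* ℂˣ, Multipliable fun p : P => (1 - (ρ (φ p) : ℂ) * (N p : ℂ) ^ (-s))⁻¹) ∧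
    (∀ n ∈ (Nat.card G).divisors,
      Multipliable fun p : {p : P // orderOf (φ p) = n} =>
        (1 - (N p.1 : ℂ) ^ (-((n : ℂ) * s)))⁻¹) ∧
    (∏' ρ : G →* ℂˣ, ∏' p : P, (1 - (ρ (φ p) : ℂ) * (N p : ℂ) ^ (-s))⁻¹)
      = ∏ n ∈ (Nat.card G).divisors,
          (∏' p : {p : P // orderOf (φ p) = n}, (1 - (N p.1 : ℂ) ^ (-((n : ℂ) * s)))⁻¹)
            ^ (Nat.card G / n) := by
  have norm_cpow (p) : ‖(N p : ℂ) ^ (-s)‖ = N p ^ (-s.re) := by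
    rw [Complex.norm_cpow_eq_rpow_re_of_pos (one_pos.trans (hN p)), Complex.neg_re]
  have cpow_mul (n : ℕ) (p) : (N p : ℂ) ^ (-((n : ℂ) * s)) = ((N p : ℂ) ^ (-s)) ^ n := by
    rw [← Complex.cpow_nat_mul, mul_neg]
  have hx (p) : ‖(N p : ℂ) ^ (-s)‖ < 1 :=
    norm_cpow p ▸ Real.rpow_lt_one_of_one_lt_of_neg (hN p) (neg_lt_zero.2 hs)
  have hx_sum : Summable fun p => ‖(N p : ℂ) ^ (-s)‖ := by simpa only [norm_cpow] using hsum
  simp only [cpow_mul]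
  refine ⟨fun ρ => ?_, fun n hn => ?_, tprod_monoidHom_tprod_inv_one_sub φ hx hx_sum⟩
  · exact multipliable_inv_one_sub_mul (fun p => (norm_monoidHom_apply ρ (φ p)).le) hx hx_sum
  · exact multipliable_inv_one_sub_pow (Nat.pos_of_mem_divisors hn).ne' (fun p => hx p)
      (hx_sum.subtype _)

/-- Let `G` be a cyclic group of order `m ≥ 1` and `φ : P → G`.  With
`ζ_Q(s) = ∏_{p ∈ Q} (1 - N(p)^(-s))⁻¹`, `P_n = {p : ord(φ(p)) = n}`,
`L_P(s,ρ) = ∏_{p ∈ P} (1 - ρ(φ(p)) N(p)^(-s))⁻¹` and `Z_P(s) = ∏_ρ L_P(s,ρ)` (product over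
all characters `ρ : G → ℂˣ`), for `Re s > 1` one has
`Z_P(s) = ∏_{n ∣ m} ζ_{P_n}(ns)^(m/n)`, all infinite products involved converging. -/
theorem ZP_eq_prod_zetaPn {P : Type*} [Countable P] [Infinite P] (N : P → ℝ)
    (hN : ∀ p, 1 < N p)
    (hsum : ∀ σ : ℝ, 1 < σ → Summable fun p => (N p) ^ (-σ))
    {G : Type*} [CommGroup G] [Fintype G] [IsCyclic G] (m : ℕ) (hm : 1 ≤ m)
    (hcard : Fintype.card G = m)
    (φ : P → G) (s : ℂ) (hs : 1 < s.re) :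
    (∀ ρ : G →* ℂˣ, Multipliable fun p : P => (1 - (ρ (φ p) : ℂ) * (N p : ℂ) ^ (-s))⁻¹) ∧
    (∀ n ∈ m.divisors,
      Multipliable fun p : {p : P // orderOf (φ p) = n} =>
        (1 - (N p.1 : ℂ) ^ (-((n : ℂ) * s)))⁻¹) ∧
    (∏' ρ : G →* ℂˣ, ∏' p : P, (1 - (ρ (φ p) : ℂ) * (N p : ℂ) ^ (-s))⁻¹)
      = ∏ n ∈ m.divisors,
          (∏' p : {p : P // orderOf (φ p) = n}, (1 - (N p.1 : ℂ) ^ (-((n : ℂ) * s)))⁻¹)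
            ^ (m / n) := by
  subst hcard
  rw [Fintype.card_eq_nat_card]
  exact ZP_eq_prod_zetaPn_general N hN φ s (one_pos.trans hs) (hsum _ hs)
end

section
/- Let q be a prime and G a cyclic group of order q. Then for every s with Re s > 1, ζ_{P_q}(s)^q / ζ_{P_q}(qs) = ζ_P(s)^q / Z_P(s); in particular all the infinite products involved converge and are nonzero. -/
/-!
For a finite abelian group `G` of order `n` and `g : G` of order `m`, evaluation at `g` sends the
characters of `G` onto the `m`-th roots of unity, with all fibres of size `n / m`; hence
`∏ χ, (1 - χ g * x) = (1 - x ^ m) ^ (n / m)`. Applied to the local factors at every `p`, this turns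
the product of all `L`-functions into a single Euler product, whose factors at the `p` with
`φ p = 1` are those of `ζ_P ^ n`. In `ζ_P ^ n / Z_P` these cancel, and only the `p` with `φ p ≠ 1`
survive; if `n = q` is prime, then every such `φ p` has order `q`.
-/

section CharacterExtension

variable {G M : Type*} [CommGroup G] [Finite G] [CommMonoid M]
  [HasEnoughRootsOfUnity M (Monoid.exponent G)]

lemma exists_monoidHom_apply_eq_of_pow_orderOf_eq_one (g : G) {u : Mˣ} (hu : u ^ orderOf g = 1) :
    ∃ χ : G →* Mˣ, χ g = u := by
  let γ : Subgroup.zpowers g := ⟨g, Subgroup.mem_zpowers g⟩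
  have hγ : ∀ x, x ∈ Subgroup.zpowers γ := by
    rintro ⟨_, k, rfl⟩
    exact ⟨k, rfl⟩
  have hord : orderOf u ∣ orderOf γ := by
    rwa [Subgroup.orderOf_mk, orderOf_dvd_iff_pow_eq_one]
  obtain ⟨χ, hχ⟩ := MonoidHom.domRestrict_surjective M (Subgroup.zpowers g)
    (monoidHomOfForallMemZpowers hγ hord)
  refine ⟨χ, ?_⟩
  calc χ g = MonoidHom.domRestrictHom (Subgroup.zpowers g) Mˣ χ γ := rfl
    _ = u := by rw [hχ, monoidHomOfForallMemZpowers_apply_gen]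

lemma natCard_monoidHom_apply_eq_one (g : G) :
    Nat.card {χ : G →* Mˣ // χ g = 1} = Nat.card G / orderOf g := by
  have hker (χ : G →* Mˣ) :
      χ ∈ (MonoidHom.domRestrictHom (Subgroup.zpowers g) Mˣ).ker ↔ χ g = 1 := by
    rw [MonoidHom.mem_ker, MonoidHom.domRestrictHom_apply, MonoidHom.domRestrict_eq_one_iff]
    exact ⟨fun h => h g (Subgroup.mem_zpowers g), by
      rintro h _ ⟨k, rfl⟩
      simp only [map_zpow, h, one_zpow]⟩
  rw [← Nat.card_congr (Equiv.subtypeEquivRight hker), CommGroup.card_domRestrictHom_ker,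
    ← Nat.card_zpowers, Subgroup.card_eq_card_quotient_mul_card_subgroup (Subgroup.zpowers g),
    Nat.mul_div_cancel _ Nat.card_pos]

lemma natCard_monoidHom_apply_eq (g : G) {u : Mˣ} (hu : u ^ orderOf g = 1) :
    Nat.card {χ : G →* Mˣ // χ g = u} = Nat.card G / orderOf g := by
  obtain ⟨χ₀, rfl⟩ := exists_monoidHom_apply_eq_of_pow_orderOf_eq_one g hu
  rw [← natCard_monoidHom_apply_eq_one (M := M) g]
  exact Nat.card_congr ((Equiv.mulLeft χ₀⁻¹).subtypeEquiv fun χ => by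
    rw [Equiv.coe_mulLeft, MonoidHom.mul_apply, MonoidHom.inv_apply, inv_mul_eq_one, eq_comm])

end CharacterExtension

lemma monoidHom_apply_pow_orderOf {G M : Type*} [Group G] [Monoid M] (χ : G →* Mˣ) (g : G) :
    (χ g : M) ^ orderOf g = 1 := by
  rw [← Units.val_pow_eq_pow_val, ← map_pow, pow_orderOf_eq_one, map_one, Units.val_one]

lemma monoidHom_apply_mul_ne_one {G M : Type*} [Group G] [CommMonoid M] (χ : G →* Mˣ) {g : G}
    {x : M} (hx : x ^ orderOf g ≠ 1) : (χ g : M) * x ≠ 1 := by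
  contrapose! hx
  calc x ^ orderOf g = ((χ g : M) * x) ^ orderOf g := by
        rw [mul_pow, monoidHom_apply_pow_orderOf, one_mul]
    _ = 1 := by rw [hx, one_pow]

lemma prod_one_sub_monoidHom_apply_mul {G K : Type*} [CommGroup G] [Finite G] [CommRing K]
    [IsDomain K] [HasEnoughRootsOfUnity K (Monoid.exponent G)] [Fintype (G →* Kˣ)]
    (g : G) (x : K) :
    ∏ χ : G →* Kˣ, (1 - (χ g : K) * x) = (1 - x ^ orderOf g) ^ (Nat.card G / orderOf g) := by
  classical
  have hpos : 0 < orderOf g := orderOf_pos g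
  have hroot (χ : G →* Kˣ) : (χ g : K) ∈ Polynomial.nthRootsFinset (orderOf g) (1 : K) := by
    rw [Polynomial.mem_nthRootsFinset hpos, monoidHom_apply_pow_orderOf]
  have hfiber (z : K) (hz : z ∈ Polynomial.nthRootsFinset (orderOf g) (1 : K)) :
      Finset.card {χ : G →* Kˣ | (χ g : K) = z} = Nat.card G / orderOf g := by
    rw [Polynomial.mem_nthRootsFinset hpos] at hz
    rw [← natCard_monoidHom_apply_eq g (Units.pow_ofPowEqOne hz hpos.ne'),
      Nat.card_eq_fintype_card, Fintype.card_subtype]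
    simp only [Units.ext_iff, Units.val_ofPowEqOne]
  obtain ⟨ζ, hζ⟩ := (HasEnoughRootsOfUnity.of_dvd K
    (Monoid.order_dvd_exponent g)).exists_primitiveRoot
  calc ∏ χ : G →* Kˣ, (1 - (χ g : K) * x)
      = ∏ z ∈ Polynomial.nthRootsFinset (orderOf g) (1 : K),
          ∏ χ : G →* Kˣ with (χ g : K) = z, (1 - z * x) :=
        (Finset.prod_fiberwise_of_maps_to' (fun χ _ => hroot χ) fun z => 1 - z * x).symm
    _ = ∏ z ∈ Polynomial.nthRootsFinset (orderOf g) (1 : K),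
          (1 - z * x) ^ (Nat.card G / orderOf g) :=
        Finset.prod_congr rfl fun z hz => by rw [Finset.prod_const, hfiber z hz]
    _ = (1 - x ^ orderOf g) ^ (Nat.card G / orderOf g) := by
        rw [Finset.prod_pow, ← hζ.pow_sub_pow_eq_prod_sub_mul 1 x hpos, one_pow]

lemma prod_inv_one_sub_monoidHom_apply_mul {G K : Type*} [CommGroup G] [Finite G] [Field K]
    [HasEnoughRootsOfUnity K (Monoid.exponent G)] [Fintype (G →* Kˣ)] (g : G) (x : K) :
    ∏ χ : G →* Kˣ, (1 - (χ g : K) * x)⁻¹ =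
      (1 - x ^ orderOf g)⁻¹ ^ (Nat.card G / orderOf g) := by
  rw [Finset.prod_inv_distrib, prod_one_sub_monoidHom_apply_mul, inv_pow]

section EulerProducts

lemma tprod_subtype_mul_tprod_subtype_not {ι M : Type*} [CommMonoid M] [TopologicalSpace M]
    [ContinuousMul M] [T2Space M] {a : ι → M} {r : ι → Prop}
    (hr : Multipliable fun i : {i // r i} => a i)
    (hr_not : Multipliable fun i : {i // ¬ r i} => a i) :
    (∏' i : {i // r i}, a i) * ∏' i : {i // ¬ r i}, a i = ∏' i, a i :=
  Multipliable.tprod_mul_tprod_compl (s := {i | r i}) hr hr_not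

lemma multipliable_one_sub_of_summable {ι R : Type*} [NormedCommRing R] [NormOneClass R]
    [CompleteSpace R] {f : ι → R} (hf : Summable fun i => ‖f i‖) :
    Multipliable fun i => 1 - f i := by
  simpa only [sub_eq_add_neg] using multipliable_one_add_of_summable (f := fun i => -f i)
    (by simpa only [norm_neg] using hf)

lemma tprod_one_sub_ne_zero_of_summable {ι R : Type*} [NormedCommRing R] [NormOneClass R]
    [NormMulClass R] [CompleteSpace R] {f : ι → R} (hf : Summable fun i => ‖f i‖)
    (hf1 : ∀ i, f i ≠ 1) : ∏' i, (1 - f i) ≠ 0 := by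
  simpa only [sub_eq_add_neg] using tprod_one_add_ne_zero_of_summable (f := fun i => -f i)
    (fun i => by simpa only [← sub_eq_add_neg] using sub_ne_zero.mpr (hf1 i).symm)
    (by simpa only [norm_neg] using hf)

variable {ι K : Type*} [NormedField K] [CompleteSpace K]

lemma multipliable_inv_one_sub_of_summable {f : ι → K} (hf : Summable fun i => ‖f i‖)
    (hf1 : ∀ i, f i ≠ 1) : Multipliable fun i => (1 - f i)⁻¹ :=
  (multipliable_one_sub_of_summable hf).inv₀ (tprod_one_sub_ne_zero_of_summable hf hf1)

lemma tprod_inv_one_sub_ne_zero_of_summable {f : ι → K} (hf : Summable fun i => ‖f i‖)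
    (hf1 : ∀ i, f i ≠ 1) : ∏' i, (1 - f i)⁻¹ ≠ 0 := by
  have hne := tprod_one_sub_ne_zero_of_summable hf hf1
  rw [(multipliable_one_sub_of_summable hf).tprod_inv₀ hne]
  exact inv_ne_zero hne

end EulerProducts

section LFunctions

lemma norm_monoidHom_apply_s2 {G K : Type*} [Group G] [Finite G] [NormedDivisionRing K]
    (χ : G →* Kˣ) (g : G) : ‖(χ g : K)‖ = 1 :=
  ((Units.coeHom K).comp χ).isOfFinOrder (isOfFinOrder_of_finite g) |>.norm_eq_one

variable {P G K : Type*} [NormedField K] [CompleteSpace K] {f : P → K}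

section Group

variable [Group G] [Finite G] {φ : P → G}

lemma multipliable_inv_one_sub_monoidHom_apply_mul (hf : Summable fun p => ‖f p‖)
    (hf1 : ∀ p, f p ^ orderOf (φ p) ≠ 1) (χ : G →* Kˣ) :
    Multipliable fun p => (1 - (χ (φ p) : K) * f p)⁻¹ :=
  multipliable_inv_one_sub_of_summable
    (by simpa only [norm_mul, norm_monoidHom_apply_s2, one_mul] using hf)
    fun p => monoidHom_apply_mul_ne_one χ (hf1 p)

lemma tprod_inv_one_sub_monoidHom_apply_mul_ne_zero (hf : Summable fun p => ‖f p‖)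
    (hf1 : ∀ p, f p ^ orderOf (φ p) ≠ 1) (χ : G →* Kˣ) :
    ∏' p, (1 - (χ (φ p) : K) * f p)⁻¹ ≠ 0 :=
  tprod_inv_one_sub_ne_zero_of_summable
    (by simpa only [norm_mul, norm_monoidHom_apply_s2, one_mul] using hf)
    fun p => monoidHom_apply_mul_ne_one χ (hf1 p)

end Group

variable [CommGroup G] [Finite G] [HasEnoughRootsOfUnity K (Monoid.exponent G)] {φ : P → G}

lemma multipliable_inv_one_sub_pow_orderOf_pow (hf : Summable fun p => ‖f p‖)
    (hf1 : ∀ p, f p ^ orderOf (φ p) ≠ 1) :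
    Multipliable fun p => (1 - f p ^ orderOf (φ p))⁻¹ ^ (Nat.card G / orderOf (φ p)) := by
  have := Fintype.ofFinite (G →* Kˣ)
  simpa only [prod_inv_one_sub_monoidHom_apply_mul] using
    multipliable_prod (s := Finset.univ)
      fun χ _ => multipliable_inv_one_sub_monoidHom_apply_mul hf hf1 χ

lemma tprod_tprod_inv_one_sub_monoidHom_apply_mul (hf : Summable fun p => ‖f p‖)
    (hf1 : ∀ p, f p ^ orderOf (φ p) ≠ 1) :
    ∏' χ : G →* Kˣ, ∏' p, (1 - (χ (φ p) : K) * f p)⁻¹ =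
      ∏' p, (1 - f p ^ orderOf (φ p))⁻¹ ^ (Nat.card G / orderOf (φ p)) := by
  have := Fintype.ofFinite (G →* Kˣ)
  rw [tprod_fintype, ← Multipliable.tprod_finsetProd
    fun χ _ => multipliable_inv_one_sub_monoidHom_apply_mul hf hf1 χ]
  simp only [prod_inv_one_sub_monoidHom_apply_mul]

lemma tprod_inv_one_sub_pow_orderOf_pow_ne_zero (hf : Summable fun p => ‖f p‖)
    (hf1 : ∀ p, f p ^ orderOf (φ p) ≠ 1) :
    ∏' p, (1 - f p ^ orderOf (φ p))⁻¹ ^ (Nat.card G / orderOf (φ p)) ≠ 0 := by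
  have := Fintype.ofFinite (G →* Kˣ)
  rw [← tprod_tprod_inv_one_sub_monoidHom_apply_mul hf hf1, tprod_fintype]
  exact Finset.prod_ne_zero_iff.mpr
    fun χ _ => tprod_inv_one_sub_monoidHom_apply_mul_ne_zero hf hf1 χ

lemma tprod_tprod_inv_one_sub_monoidHom_apply_mul_eq_mul (hf : Summable fun p => ‖f p‖)
    (hf1 : ∀ p, f p ^ orderOf (φ p) ≠ 1) :
    ∏' χ : G →* Kˣ, ∏' p, (1 - (χ (φ p) : K) * f p)⁻¹ =
      (∏' p : {p // φ p = 1}, (1 - f p)⁻¹) ^ Nat.card G *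
        ∏' p : {p // φ p ≠ 1},
          (1 - f p ^ orderOf (φ p))⁻¹ ^ (Nat.card G / orderOf (φ p)) := by
  let E (p : P) : K := (1 - f p ^ orderOf (φ p))⁻¹ ^ (Nat.card G / orderOf (φ p))
  have hE (r : P → Prop) : Multipliable fun p : {p // r p} => E p :=
    multipliable_inv_one_sub_pow_orderOf_pow (hf.comp_injective Subtype.val_injective)
      fun p => hf1 p
  have hE_one (p : {p // φ p = 1}) : E p = (1 - f p)⁻¹ ^ Nat.card G := by
    simp only [E, p.2, orderOf_one, pow_one, Nat.div_one]
  have hsplit : Multipliable fun p : {p // φ p = 1} => (1 - f p)⁻¹ :=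
    multipliable_inv_one_sub_of_summable (hf.comp_injective Subtype.val_injective)
      fun p h => hf1 p (by rw [h, one_pow])
  calc ∏' χ : G →* Kˣ, ∏' p, (1 - (χ (φ p) : K) * f p)⁻¹
      = ∏' p, E p := tprod_tprod_inv_one_sub_monoidHom_apply_mul hf hf1
    _ = (∏' p : {p // φ p = 1}, E p) * ∏' p : {p // φ p ≠ 1}, E p :=
        (tprod_subtype_mul_tprod_subtype_not (hE _) (hE _)).symm
    _ = (∏' p : {p // φ p = 1}, (1 - f p)⁻¹) ^ Nat.card G * ∏' p : {p // φ p ≠ 1}, E p := by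
        rw [tprod_congr hE_one, hsplit.tprod_pow]

end LFunctions

/-- Here `f p` plays the role of `N p ^ (-s)`, so that `f p ^ m` corresponds to `N p ^ (-(m * s))`.
-/
theorem zetaPq_functional_equation_general {P G K : Type*} [NormedField K] [CompleteSpace K]
    [CommGroup G] [Finite G] [HasEnoughRootsOfUnity K (Monoid.exponent G)]
    {φ : P → G} {f : P → K} (hf : Summable fun p => ‖f p‖)
    (hf1 : ∀ p, f p ^ orderOf (φ p) ≠ 1) :
    Multipliable (fun p : {p // φ p ≠ 1} => (1 - f p)⁻¹) ∧
    Multipliable (fun p : {p // φ p ≠ 1} =>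
      (1 - f p ^ orderOf (φ p))⁻¹ ^ (Nat.card G / orderOf (φ p))) ∧
    Multipliable (fun p => (1 - f p)⁻¹) ∧
    (∀ χ : G →* Kˣ, Multipliable fun p => (1 - (χ (φ p) : K) * f p)⁻¹) ∧
    (∏' p : {p // φ p ≠ 1}, (1 - f p)⁻¹) ≠ 0 ∧
    (∏' p : {p // φ p ≠ 1},
      (1 - f p ^ orderOf (φ p))⁻¹ ^ (Nat.card G / orderOf (φ p))) ≠ 0 ∧
    (∏' p, (1 - f p)⁻¹) ≠ 0 ∧
    (∀ χ : G →* Kˣ, (∏' p, (1 - (χ (φ p) : K) * f p)⁻¹) ≠ 0) ∧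
    (∏' p : {p // φ p ≠ 1}, (1 - f p)⁻¹) ^ Nat.card G
        / (∏' p : {p // φ p ≠ 1},
            (1 - f p ^ orderOf (φ p))⁻¹ ^ (Nat.card G / orderOf (φ p)))
      = (∏' p, (1 - f p)⁻¹) ^ Nat.card G
        / (∏' χ : G →* Kˣ, ∏' p, (1 - (χ (φ p) : K) * f p)⁻¹) := by
  have hf_ne (p : P) : f p ≠ 1 := fun h => hf1 p (by rw [h, one_pow])
  have hf_sub (r : P → Prop) : Summable fun p : {p // r p} => ‖f p‖ :=
    hf.comp_injective Subtype.val_injective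
  have hζ (r : P → Prop) : Multipliable fun p : {p // r p} => (1 - f p)⁻¹ :=
    multipliable_inv_one_sub_of_summable (hf_sub r) fun p => hf_ne p
  have hζ_ne (r : P → Prop) : ∏' p : {p // r p}, (1 - f p)⁻¹ ≠ 0 :=
    tprod_inv_one_sub_ne_zero_of_summable (hf_sub r) fun p => hf_ne p
  refine ⟨hζ _, multipliable_inv_one_sub_pow_orderOf_pow (hf_sub _) fun p => hf1 p,
    multipliable_inv_one_sub_of_summable hf hf_ne,
    multipliable_inv_one_sub_monoidHom_apply_mul hf hf1, hζ_ne _,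
    tprod_inv_one_sub_pow_orderOf_pow_ne_zero (hf_sub _) fun p => hf1 p,
    tprod_inv_one_sub_ne_zero_of_summable hf hf_ne,
    tprod_inv_one_sub_monoidHom_apply_mul_ne_zero hf hf1, ?_⟩
  rw [tprod_tprod_inv_one_sub_monoidHom_apply_mul_eq_mul hf hf1,
    ← tprod_subtype_mul_tprod_subtype_not (a := fun p => (1 - f p)⁻¹) (hζ (φ · = 1)) (hζ _),
    mul_pow, mul_div_mul_left _ _ (pow_ne_zero _ (hζ_ne _))]

lemma norm_ofReal_cpow_neg_lt_one {x : ℝ} (hx : 1 < x) {s : ℂ} (hs : 0 < s.re) :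
    ‖(x : ℂ) ^ (-s)‖ < 1 := by
  rw [Complex.norm_cpow_eq_rpow_re_of_pos (zero_lt_one.trans hx)]
  exact Real.rpow_lt_one_of_one_lt_of_neg hx (neg_neg_of_pos hs)

/-- Let `q` be a prime, `G` a cyclic group of order `q`, `φ : P → G`,
`P_q = {p : φ(p) ≠ 1}`.  With `ζ_Q(s) = ∏_{p ∈ Q} (1 - N(p)^(-s))⁻¹`,
`L_P(s,ρ) = ∏_{p ∈ P} (1 - ρ(φ(p)) N(p)^(-s))⁻¹` and `Z_P(s) = ∏_ρ L_P(s,ρ)` (product over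
all characters `ρ : G → ℂˣ`), for `Re s > 1` one has
`ζ_{P_q}(s)^q / ζ_{P_q}(qs) = ζ_P(s)^q / Z_P(s)`, all products involved converging and
being nonzero. -/
theorem zetaPq_functional_equation {P : Type*} [Countable P] [Infinite P] (N : P → ℝ)
    (hN : ∀ p, 1 < N p)
    (hsum : ∀ σ : ℝ, 1 < σ → Summable fun p => (N p) ^ (-σ))
    {G : Type*} [Group G] [Fintype G] (q : ℕ) (hq : q.Prime) (hcard : Fintype.card G = q)
    (φ : P → G) (s : ℂ) (hs : 1 < s.re) :
    Multipliable (fun p : {p : P // φ p ≠ 1} => (1 - (N p.1 : ℂ) ^ (-s))⁻¹) ∧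
    Multipliable (fun p : {p : P // φ p ≠ 1} => (1 - (N p.1 : ℂ) ^ (-((q : ℂ) * s)))⁻¹) ∧
    Multipliable (fun p : P => (1 - (N p : ℂ) ^ (-s))⁻¹) ∧
    (∀ ρ : G →* ℂˣ, Multipliable fun p : P => (1 - (ρ (φ p) : ℂ) * (N p : ℂ) ^ (-s))⁻¹) ∧
    (∏' p : {p : P // φ p ≠ 1}, (1 - (N p.1 : ℂ) ^ (-s))⁻¹) ≠ 0 ∧
    (∏' p : {p : P // φ p ≠ 1}, (1 - (N p.1 : ℂ) ^ (-((q : ℂ) * s)))⁻¹) ≠ 0 ∧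
    (∏' p : P, (1 - (N p : ℂ) ^ (-s))⁻¹) ≠ 0 ∧
    (∀ ρ : G →* ℂˣ, (∏' p : P, (1 - (ρ (φ p) : ℂ) * (N p : ℂ) ^ (-s))⁻¹) ≠ 0) ∧
    (∏' p : {p : P // φ p ≠ 1}, (1 - (N p.1 : ℂ) ^ (-s))⁻¹) ^ q
        / (∏' p : {p : P // φ p ≠ 1}, (1 - (N p.1 : ℂ) ^ (-((q : ℂ) * s)))⁻¹)
      = (∏' p : P, (1 - (N p : ℂ) ^ (-s))⁻¹) ^ q
        / (∏' ρ : G →* ℂˣ, ∏' p : P, (1 - (ρ (φ p) : ℂ) * (N p : ℂ) ^ (-s))⁻¹) := by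
  have : Fact q.Prime := ⟨hq⟩
  have hG : Nat.card G = q := Nat.card_eq_fintype_card.trans hcard
  have : IsCyclic G := isCyclic_of_prime_card hG
  let _ : CommGroup G := IsCyclic.commGroup
  have hord (p : {p : P // φ p ≠ 1}) : orderOf (φ p.1) = q :=
    (orderOf_eq_card_of_forall_mem_zpowers fun _ => mem_zpowers_of_prime_card hG p.2).trans hG
  have hf : Summable fun p => ‖(N p : ℂ) ^ (-s)‖ := by
    simpa only [Complex.norm_cpow_eq_rpow_re_of_pos (zero_lt_one.trans (hN _)),
      Complex.neg_re] using hsum s.re hs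
  have hf1 (p : P) : ((N p : ℂ) ^ (-s)) ^ orderOf (φ p) ≠ 1 := fun h =>
    (norm_ofReal_cpow_neg_lt_one (hN p) (zero_lt_one.trans hs)).ne
      (Complex.norm_eq_one_of_pow_eq_one h (orderOf_pos _).ne')
  simpa only [hord, hG, Nat.div_self hq.pos, pow_one, ← Complex.cpow_nat_mul, mul_neg] using
    zetaPq_functional_equation_general hf hf1
end

section
/- Let q ≥ 2 be an integer, let f be a nonvanishing holomorphic function on the half-plane {Re s > 1}, and let g be a meromorphic function on ℂ such that f(s)^q = f(qs)·g(s) for all s with Re s > 1. Then for every integer r ≥ 1 there exists a meromorphic function F_r on the half-plane {Re s > 1/q^r} such that F_r(s) = f(s)^{q^r} for all s with Re s > 1. -/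
/-!
Replacing `s` by `q * s` in the functional equation and raising to the right powers gives
`f(s)^(q^r) = f(q^r s) * ∏_{j < r} g(q^j s)^(q^(r-1-j))` for `Re s > 1`. The right-hand side is
meromorphic wherever `Re (q^r s) > 1`, so it is the continuation sought.
-/

open Finset Set

section Algebra

variable {α M : Type*} [CommMonoid M]

/-- The product obtained by applying the functional equation `f s ^ n = f (φ s) * g s` to
`f s ^ n ^ r`, `r` times in succession. It makes sense wherever `φ^[r] s` lies in the domain of
`f`, and so extends `f ^ n ^ r`. Only indices `j < r` occur, so the natural-number subtraction is
never truncated. -/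
def iteratedPowProd (φ : α → α) (f g : α → M) (n r : ℕ) (s : α) : M :=
  f (φ^[r] s) * ∏ j ∈ range r, g (φ^[j] s) ^ n ^ (r - 1 - j)

theorem iteratedPowProd_succ (φ : α → α) (f g : α → M) (n r : ℕ) (s : α) :
    iteratedPowProd φ f g n (r + 1) s = iteratedPowProd φ f g n r (φ s) * g s ^ n ^ r := by
  simp only [iteratedPowProd, prod_range_succ', Function.iterate_succ_apply,
    Function.iterate_zero_apply, Nat.add_sub_cancel, Nat.sub_zero, Nat.sub_add_eq,
    Nat.sub_right_comm, mul_assoc]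

theorem iteratedPowProd_eq_pow {φ : α → α} {f g : α → M} {n : ℕ} {U : Set α}
    (hφ : MapsTo φ U U) (hfg : ∀ s ∈ U, f s ^ n = f (φ s) * g s) (r : ℕ) {s : α} (hs : s ∈ U) :
    iteratedPowProd φ f g n r s = f s ^ n ^ r := by
  induction r generalizing s with
  | zero => simp [iteratedPowProd]
  | succ r ih =>
    calc iteratedPowProd φ f g n (r + 1) s
      _ = f (φ s) ^ n ^ r * g s ^ n ^ r := by rw [iteratedPowProd_succ, ih (hφ hs)]
      _ = (f s ^ n) ^ n ^ r := by rw [hfg s hs, mul_pow]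
      _ = f s ^ n ^ (r + 1) := by rw [← pow_mul, pow_succ']

end Algebra

section Meromorphy

variable {𝕜 : Type*} [NontriviallyNormedField 𝕜] {φ : 𝕜 → 𝕜} {U V : Set 𝕜}

theorem analyticOnNhd_iterate (hφ : AnalyticOnNhd 𝕜 φ V) (hφV : MapsTo φ V V) (r : ℕ) :
    AnalyticOnNhd 𝕜 φ^[r] V := by
  induction r with
  | zero => exact analyticOnNhd_id
  | succ r ih => exact ih.comp hφ hφV

theorem meromorphicOn_iteratedPowProd {𝕜' : Type*} [NontriviallyNormedField 𝕜']
    [NormedAlgebra 𝕜 𝕜'] {f g : 𝕜 → 𝕜'} (n : ℕ) {r : ℕ}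
    (hφ : AnalyticOnNhd 𝕜 φ V) (hφV : MapsTo φ V V) (hφU : MapsTo φ^[r] V U)
    (hf : MeromorphicOn f U) (hg : MeromorphicOn g V) :
    MeromorphicOn (iteratedPowProd φ f g n r) V := by
  intro s hs
  have hiter (j : ℕ) : AnalyticAt 𝕜 φ^[j] s := analyticOnNhd_iterate hφ hφV j s hs
  have hfφ : MeromorphicAt (fun z ↦ f (φ^[r] z)) s :=
    (hf _ (hφU hs)).comp_analyticAt (hiter r)
  have hgφ (j : ℕ) : MeromorphicAt (fun z ↦ g (φ^[j] z)) s :=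
    (hg _ (hφV.iterate j hs)).comp_analyticAt (hiter j)
  exact hfφ.mul (.fun_prod fun j _ ↦ (hgφ j).pow _)

end Meromorphy

theorem mapsTo_ofReal_mul_re_gt {a c : ℝ} (ha : 0 ≤ a) (hc : 1 ≤ c) :
    MapsTo (fun s : ℂ ↦ (c : ℂ) * s) {s | a < s.re} {s | a < s.re} := by
  intro s (hs : a < s.re)
  calc a < s.re := hs
    _ ≤ c * s.re := le_mul_of_one_le_left (ha.trans hs.le) hc
    _ = ((c : ℂ) * s).re := (Complex.re_ofReal_mul c s).symm

theorem mapsTo_iterate_ofReal_mul_re_gt (a : ℝ) {c : ℝ} (hc : 0 < c) (r : ℕ) :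
    MapsTo (fun s : ℂ ↦ (c : ℂ) * s)^[r] {s | a / c ^ r < s.re} {s | a < s.re} := by
  intro s (hs : a / c ^ r < s.re)
  rw [mul_left_iterate, mem_ofPred_eq, ← Complex.ofReal_pow, Complex.re_ofReal_mul]
  exact (div_lt_iff₀' (pow_pos hc r)).mp hs

theorem exists_meromorphic_continuation_pow_general {a c : ℝ} (ha : 0 ≤ a) (hc : 1 ≤ c) (n r : ℕ)
    {f g : ℂ → ℂ} (hf : MeromorphicOn f {s : ℂ | a < s.re})
    (hg : MeromorphicOn g {s : ℂ | a / c ^ r < s.re})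
    (hfg : ∀ s : ℂ, a < s.re → f s ^ n = f ((c : ℂ) * s) * g s) :
    ∃ F : ℂ → ℂ, MeromorphicOn F {s : ℂ | a / c ^ r < s.re} ∧
      ∀ s : ℂ, a < s.re → F s = f s ^ n ^ r := by
  have hc₀ : 0 < c := one_pos.trans_le hc
  have hmero := meromorphicOn_iteratedPowProd n (fun _ _ ↦ by fun_prop)
    (mapsTo_ofReal_mul_re_gt (by positivity) hc) (mapsTo_iterate_ofReal_mul_re_gt a hc₀ r) hf hg
  exact ⟨_, hmero, fun _ ↦ iteratedPowProd_eq_pow (mapsTo_ofReal_mul_re_gt ha hc) hfg r⟩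

/-- Let `q ≥ 2`, `f` a nonvanishing holomorphic function on `{Re s > 1}`, and `g` meromorphic
on `ℂ` with `f(s)^q = f(qs) * g(s)` for `Re s > 1`.  Then for every `r ≥ 1` there is a
meromorphic function `F_r` on `{Re s > 1/q^r}` with `F_r(s) = f(s)^(q^r)` for `Re s > 1`. -/
theorem exists_meromorphic_continuation_pow (q : ℕ) (hq : 2 ≤ q) (f g : ℂ → ℂ)
    (hf_holo : DifferentiableOn ℂ f {s : ℂ | 1 < s.re})
    (hf_ne : ∀ s : ℂ, 1 < s.re → f s ≠ 0)
    (hg : MeromorphicOn g Set.univ)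
    (hfg : ∀ s : ℂ, 1 < s.re → f s ^ q = f ((q : ℂ) * s) * g s)
    (r : ℕ) (hr : 1 ≤ r) :
    ∃ F : ℂ → ℂ, MeromorphicOn F {s : ℂ | 1 / (q : ℝ) ^ r < s.re} ∧
      ∀ s : ℂ, 1 < s.re → F s = f s ^ (q ^ r) := by
  have hf : MeromorphicOn f {s : ℂ | 1 < s.re} :=
    (hf_holo.analyticOnNhd (Complex.isOpen_re_gt 1)).meromorphicOn
  exact exists_meromorphic_continuation_pow_general zero_le_one (by norm_cast; lia) q r hf
    (hg.mono_set (subset_univ _)) (by simpa using hfg)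
end

section
/- Let q ≥ 2 be an integer, let f be a nonvanishing holomorphic function on {Re s > 1}, and let g be a meromorphic function on ℂ such that f(s)^q = f(qs)·g(s) for Re s > 1. Assume that g is holomorphic and nonvanishing on {Re s > 1}, that g has a pole of order q − 1 at s = 1, and that g is holomorphic and nonvanishing at the points s = q^{-l} for every integer l ≥ 1. Then for every r ≥ 1, the meromorphic continuation F_r of f^{q^r} to {Re s > 1/q^r} has, for each 0 ≤ i ≤ r − 1, a pole of order (q − 1)·q^{r−i−1} at the point s = q^{-i}. -/
open Filter Topology

/-!
Iterating the functional equation `f(s)^k = f(qs)·g(s)` writes `f(s)^{k^r}` as `f(q^r s)` times the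
product of the `g(q^j s)^{k^{r-j-1}}` with `j < r`. The factor `f(q^r s)` is holomorphic and
nonvanishing on `{Re s > 1/q^r}`, so by the identity theorem the order of `F_r` at a point `a` there
is the sum over `j < r` of `k^{r-j-1}` times the order of `g` at `q^j a`. At `a = q^{-i}` the term
`j = i` involves the order of `g` at `1`. The terms `j < i` vanish by the regularity of `g` at
negative powers of `q`, and the terms `j > i` because the functional equation forces `g` to have
order `0` on `{Re s > 1}`.
-/

lemma pow_pow_eq_iterate_mul_prod {α M : Type*} [CommMonoid M] {k : ℕ} {T : α → α} {S : Set α}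
    {f g : α → M} (hT : Set.MapsTo T S S) (hfg : ∀ s ∈ S, f s ^ k = f (T s) * g s) {s : α}
    (hs : s ∈ S) (r : ℕ) :
    f s ^ k ^ r = f (T^[r] s) * ∏ j ∈ Finset.range r, g (T^[j] s) ^ k ^ (r - j - 1) := by
  induction r with
  | zero => simp
  | succ r ih =>
    have raise_factor : ∀ j ∈ Finset.range r,
        (g (T^[j] s) ^ k ^ (r - j - 1)) ^ k = g (T^[j] s) ^ k ^ (r + 1 - j - 1) := by
      intro j hj
      have : r + 1 - j - 1 = r - j - 1 + 1 := by have := Finset.mem_range.mp hj; omega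
      rw [← pow_mul, ← pow_succ, this]
    rw [pow_succ k, pow_mul, ih, mul_pow, hfg _ (hT.iterate r hs), ← Finset.prod_pow,
      Finset.prod_congr rfl raise_factor, Finset.prod_range_succ, Function.iterate_succ_apply',
      Nat.add_sub_cancel_left, Nat.sub_self, pow_zero, pow_one, mul_assoc, mul_comm (g _)]

section MeromorphicOrder

variable {𝕜 E : Type*} [NontriviallyNormedField 𝕜] [NormedAddCommGroup E] [NormedSpace 𝕜 E]
  {f g : 𝕜 → E} {U : Set 𝕜} {x y : 𝕜}

lemma eventuallyEq_nhdsNE_of_isPreconnected (hf : MeromorphicOn f U) (hg : MeromorphicOn g U)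
    (hU : IsPreconnected U) (hx : x ∈ U) (hy : y ∈ U) (hfg : f =ᶠ[𝓝[≠] x] g) :
    f =ᶠ[𝓝[≠] y] g := by
  rw [eventuallyEq_iff_sub] at hfg ⊢
  have order_x : meromorphicOrderAt (f - g) x = ⊤ := meromorphicOrderAt_eq_top_iff.mpr hfg
  by_contra order_y
  exact (hf.sub hg).meromorphicOrderAt_ne_top_of_isPreconnected hU hy hx
    (fun h ↦ order_y (meromorphicOrderAt_eq_top_iff.mp h)) order_x

lemma meromorphicAt_comp_const_mul (c : 𝕜) (hf : MeromorphicAt f (c * x)) :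
    MeromorphicAt (fun z ↦ f (c * z)) x :=
  hf.comp_analyticAt (g := (c * ·)) (by fun_prop)

lemma meromorphicOrderAt_comp_const_mul [CompleteSpace 𝕜] [CharZero 𝕜] {c : 𝕜} (hc : c ≠ 0) :
    meromorphicOrderAt (fun z ↦ f (c * z)) x = meromorphicOrderAt f (c * x) :=
  meromorphicOrderAt_comp_of_deriv_ne_zero (g := (c * ·)) (by fun_prop) (by simpa using hc)

lemma meromorphicOrderAt_eq_neg_natCast_iff (hf : MeromorphicAt f x) {n : ℕ} :
    meromorphicOrderAt f x = ((-n : ℤ) : WithTop ℤ) ↔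
      ∃ c ≠ 0, Tendsto (fun z ↦ (z - x) ^ n • f z) (𝓝[≠] x) (𝓝 c) := by
  have hpow : MeromorphicAt (fun z ↦ (z - x) ^ n) x := by fun_prop
  rw [tendsto_ne_zero_iff_meromorphicOrderAt_eq_zero (hpow.fun_smul hf),
    fun_meromorphicOrderAt_smul hpow hf, fun_meromorphicOrderAt_pow_id_sub_const]
  cases meromorphicOrderAt f x with
  | top => simpa using (WithTop.coe_ne_top (a := (-n : ℤ))).symm
  | coe m => norm_cast; omega

end MeromorphicOrder

section FunctionalEquation

/-- The explicit formula `f(q^r s)·∏_{j<r} g(q^j s)^{k^{r-j-1}}` for the continuation `F_r` of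
`f^{k^r}`. The scale `q` and the exponent `k` of the functional equation are kept independent. -/
def continuationProduct (q : ℝ) (k r : ℕ) (f g : ℂ → ℂ) (s : ℂ) : ℂ :=
  f ((q : ℂ) ^ r * s) * ∏ j ∈ Finset.range r, g ((q : ℂ) ^ j * s) ^ k ^ (r - j - 1)

variable {q : ℝ} {k r : ℕ} {f g F : ℂ → ℂ} {a s : ℂ}

lemma isOpen_one_lt_re : IsOpen {s : ℂ | 1 < s.re} :=
  isOpen_lt continuous_const Complex.continuous_re

lemma re_ofReal_pow_mul (q : ℝ) (n : ℕ) (s : ℂ) : ((q : ℂ) ^ n * s).re = q ^ n * s.re := by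
  rw [← Complex.ofReal_pow, Complex.re_ofReal_mul]

lemma one_lt_re_pow_mul_iff (hq : 0 < q) : 1 < ((q : ℂ) ^ r * s).re ↔ 1 / q ^ r < s.re := by
  rw [re_ofReal_pow_mul, div_lt_iff₀' (by positivity)]

lemma mapsTo_const_mul_one_lt_re (hq : 1 ≤ q) :
    Set.MapsTo ((q : ℂ) * ·) {s : ℂ | 1 < s.re} {s : ℂ | 1 < s.re} := by
  intro s (hs : 1 < s.re)
  simpa using one_lt_mul_of_le_of_lt hq hs

lemma re_pow_mul_pos (hq : 0 < q) (hs : 0 < s.re) (n : ℕ) : 0 < ((q : ℂ) ^ n * s).re := by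
  rw [re_ofReal_pow_mul]
  positivity

lemma one_div_pow_lt_re_zpow_neg (hq : 1 < q) {i n : ℕ} (hin : i < n) :
    1 / q ^ n < ((q : ℂ) ^ (-(i : ℤ))).re := by
  rw [← Complex.ofReal_zpow, Complex.ofReal_re, one_div, zpow_neg, zpow_natCast]
  exact inv_strictAnti₀ (by positivity) (pow_lt_pow_right₀ hq hin)

lemma pow_pow_eq_continuationProduct (hq : 1 ≤ q)
    (hfg : ∀ s : ℂ, 1 < s.re → f s ^ k = f (q * s) * g s) (hs : 1 < s.re) :
    f s ^ k ^ r = continuationProduct q k r f g s := by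
  simpa [continuationProduct] using
    pow_pow_eq_iterate_mul_prod (mapsTo_const_mul_one_lt_re hq) hfg hs r

lemma meromorphicOn_continuationProduct (hq : 0 < q)
    (hf : DifferentiableOn ℂ f {s | 1 < s.re}) (hg : MeromorphicOn g {s | 0 < s.re}) :
    MeromorphicOn (continuationProduct q k r f g) {s | 1 / q ^ r < s.re} := by
  intro a (ha : 1 / q ^ r < a.re)
  have ha0 : 0 < a.re := lt_trans (by positivity) ha
  have hf_mero : MeromorphicAt f ((q : ℂ) ^ r * a) :=
    (hf.analyticAt (isOpen_one_lt_re.mem_nhds ((one_lt_re_pow_mul_iff hq).mpr ha))).meromorphicAt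
  exact (meromorphicAt_comp_const_mul _ hf_mero).fun_mul <| .fun_prod fun j _ ↦
    (meromorphicAt_comp_const_mul _ (hg _ (re_pow_mul_pos hq ha0 j))).fun_pow _

lemma meromorphicOrderAt_continuationProduct (hq : q ≠ 0)
    (hf : AnalyticAt ℂ f ((q : ℂ) ^ r * a)) (hf_ne : f ((q : ℂ) ^ r * a) ≠ 0)
    (hg : ∀ j < r, MeromorphicAt g ((q : ℂ) ^ j * a)) :
    meromorphicOrderAt (continuationProduct q k r f g) a =
      ∑ j ∈ Finset.range r,
        ((k ^ (r - j - 1) : ℕ) : WithTop ℤ) * meromorphicOrderAt g ((q : ℂ) ^ j * a) := by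
  have hqj (j : ℕ) : (q : ℂ) ^ j ≠ 0 := pow_ne_zero j (Complex.ofReal_ne_zero.mpr hq)
  have hg' (j : ℕ) (hj : j ∈ Finset.range r) : MeromorphicAt (fun s ↦ g ((q : ℂ) ^ j * s)) a :=
    meromorphicAt_comp_const_mul _ (hg j (Finset.mem_range.mp hj))
  unfold continuationProduct
  rw [fun_meromorphicOrderAt_mul (meromorphicAt_comp_const_mul _ hf.meromorphicAt)
      (.fun_prod fun j hj ↦ (hg' j hj).fun_pow _),
    meromorphicOrderAt_comp_const_mul (hqj r),
    hf.meromorphicNFAt.meromorphicOrderAt_eq_zero_iff.mpr hf_ne, zero_add,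
    meromorphicOrderAt_fun_prod fun j hj ↦ (hg' j hj).fun_pow _]
  refine Finset.sum_congr rfl fun j hj ↦ ?_
  rw [fun_meromorphicOrderAt_pow (hg' j hj), meromorphicOrderAt_comp_const_mul (hqj j)]

lemma eventuallyEq_continuationProduct (hq : 1 ≤ q)
    (hf : DifferentiableOn ℂ f {s | 1 < s.re}) (hg : MeromorphicOn g {s | 0 < s.re})
    (hfg : ∀ s : ℂ, 1 < s.re → f s ^ k = f (q * s) * g s)
    (hF : MeromorphicOn F {s | 1 / q ^ r < s.re})
    (hFf : ∀ s : ℂ, 1 < s.re → F s = f s ^ k ^ r) (ha : 1 / q ^ r < a.re) :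
    F =ᶠ[𝓝[≠] a] continuationProduct q k r f g := by
  have hq0 : 0 < q := one_pos.trans_le hq
  have h2 : 1 < (2 : ℂ).re := by norm_num
  have h2_mem : 1 / q ^ r < (2 : ℂ).re :=
    (div_le_one_of_le₀ (one_le_pow₀ hq) (by positivity)).trans_lt h2
  refine eventuallyEq_nhdsNE_of_isPreconnected hF (meromorphicOn_continuationProduct hq0 hf hg)
    (convex_halfSpace_re_gt _).isPreconnected h2_mem ha ?_
  filter_upwards [(isOpen_one_lt_re.eventually_mem h2).filter_mono nhdsWithin_le_nhds] with s hs
  rw [hFf s hs, pow_pow_eq_continuationProduct hq hfg hs]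

theorem meromorphicOrderAt_continuation (hq : 1 ≤ q)
    (hf : DifferentiableOn ℂ f {s | 1 < s.re}) (hf_ne : ∀ s : ℂ, 1 < s.re → f s ≠ 0)
    (hg : MeromorphicOn g {s | 0 < s.re})
    (hfg : ∀ s : ℂ, 1 < s.re → f s ^ k = f (q * s) * g s)
    (hF : MeromorphicOn F {s | 1 / q ^ r < s.re})
    (hFf : ∀ s : ℂ, 1 < s.re → F s = f s ^ k ^ r) (ha : 1 / q ^ r < a.re) :
    meromorphicOrderAt F a =
      ∑ j ∈ Finset.range r,
        ((k ^ (r - j - 1) : ℕ) : WithTop ℤ) * meromorphicOrderAt g ((q : ℂ) ^ j * a) := by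
  have hq0 : 0 < q := one_pos.trans_le hq
  have hqra : 1 < ((q : ℂ) ^ r * a).re := (one_lt_re_pow_mul_iff hq0).mpr ha
  rw [meromorphicOrderAt_congr (eventuallyEq_continuationProduct hq hf hg hfg hF hFf ha)]
  exact meromorphicOrderAt_continuationProduct hq0.ne'
    (hf.analyticAt (isOpen_one_lt_re.mem_nhds hqra)) (hf_ne _ hqra)
    fun j _ ↦ hg _ (re_pow_mul_pos hq0 (lt_trans (by positivity) ha) j)

lemma meromorphicOrderAt_eq_zero_of_functional_equation (hq : 1 ≤ q)
    (hf : DifferentiableOn ℂ f {s | 1 < s.re}) (hf_ne : ∀ s : ℂ, 1 < s.re → f s ≠ 0)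
    (hfg : ∀ s : ℂ, 1 < s.re → f s ^ k = f (q * s) * g s) (hs : 1 < s.re) :
    meromorphicOrderAt g s = 0 := by
  have hf_an {z : ℂ} (hz : 1 < z.re) : AnalyticAt ℂ f z :=
    hf.analyticAt (isOpen_one_lt_re.mem_nhds hz)
  have hqz {z : ℂ} (hz : 1 < z.re) : 1 < (q * z).re := mapsTo_const_mul_one_lt_re hq hz
  have g_eq_quotient : g =ᶠ[𝓝[≠] s] fun z ↦ f z ^ k / f (q * z) := by
    filter_upwards [(isOpen_one_lt_re.eventually_mem hs).filter_mono nhdsWithin_le_nhds] with z hz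
    rw [eq_div_iff (hf_ne _ (hqz hz)), hfg z hz, mul_comm]
  have hf_scaled : AnalyticAt ℂ (fun z ↦ f (q * z)) s :=
    (hf_an (hqz hs)).fun_comp (f := fun z : ℂ ↦ (q : ℂ) * z) (by fun_prop)
  have quotient_analytic := ((hf_an hs).fun_pow k).fun_div hf_scaled (hf_ne _ (hqz hs))
  rw [meromorphicOrderAt_congr g_eq_quotient,
    quotient_analytic.meromorphicNFAt.meromorphicOrderAt_eq_zero_iff]
  exact div_ne_zero (pow_ne_zero k (hf_ne s hs)) (hf_ne _ (hqz hs))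

lemma meromorphicOrderAt_continuation_zpow_neg (hq : 1 < q)
    (hf : DifferentiableOn ℂ f {s | 1 < s.re}) (hf_ne : ∀ s : ℂ, 1 < s.re → f s ≠ 0)
    (hg : MeromorphicOn g {s | 0 < s.re})
    (hfg : ∀ s : ℂ, 1 < s.re → f s ^ k = f (q * s) * g s)
    (hg_reg : ∀ l : ℕ, 1 ≤ l → meromorphicOrderAt g ((q : ℂ) ^ (-(l : ℤ))) = 0)
    (hF : MeromorphicOn F {s | 1 / q ^ r < s.re})
    (hFf : ∀ s : ℂ, 1 < s.re → F s = f s ^ k ^ r) {i : ℕ} (hi : i < r) :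
    meromorphicOrderAt F ((q : ℂ) ^ (-(i : ℤ))) =
      ((k ^ (r - i - 1) : ℕ) : WithTop ℤ) * meromorphicOrderAt g 1 := by
  have hq0 : (q : ℂ) ≠ 0 := Complex.ofReal_ne_zero.mpr (by positivity)
  have order_g_eq_zero {j : ℕ} (hji : j ≠ i) :
      meromorphicOrderAt g ((q : ℂ) ^ j * (q : ℂ) ^ (-(i : ℤ))) = 0 := by
    rcases hji.lt_or_gt with hlt | hgt
    · have : (q : ℂ) ^ j * (q : ℂ) ^ (-(i : ℤ)) = (q : ℂ) ^ (-((i - j : ℕ) : ℤ)) := by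
        rw [← zpow_natCast, ← zpow_add₀ hq0]
        congr 1
        omega
      rw [this, hg_reg _ (by omega)]
    · exact meromorphicOrderAt_eq_zero_of_functional_equation hq.le hf hf_ne hfg
        ((one_lt_re_pow_mul_iff (one_pos.trans hq)).mpr (one_div_pow_lt_re_zpow_neg hq hgt))
  have hi_re := one_div_pow_lt_re_zpow_neg hq hi
  rw [meromorphicOrderAt_continuation hq.le hf hf_ne hg hfg hF hFf hi_re,
    Finset.sum_eq_single_of_mem i (Finset.mem_range.mpr hi)
      fun j _ hji ↦ by rw [order_g_eq_zero hji, mul_zero],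
    zpow_neg, zpow_natCast, mul_inv_cancel₀ (pow_ne_zero i hq0)]

theorem continuation_pole_orders_general {m : ℕ} (hq : 1 < q)
    (hf : DifferentiableOn ℂ f {s | 1 < s.re}) (hf_ne : ∀ s : ℂ, 1 < s.re → f s ≠ 0)
    (hg : MeromorphicOn g {s | 0 < s.re})
    (hfg : ∀ s : ℂ, 1 < s.re → f s ^ k = f (q * s) * g s)
    (hg_pole : ∃ c ≠ 0, Tendsto (fun s : ℂ ↦ (s - 1) ^ m * g s) (𝓝[≠] 1) (𝓝 c))
    (hg_reg : ∀ l : ℕ, 1 ≤ l → meromorphicOrderAt g ((q : ℂ) ^ (-(l : ℤ))) = 0)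
    (hF : MeromorphicOn F {s | 1 / q ^ r < s.re})
    (hFf : ∀ s : ℂ, 1 < s.re → F s = f s ^ k ^ r) {i : ℕ} (hi : i < r) :
    ∃ c ≠ 0, Tendsto
      (fun s : ℂ ↦ (s - (q : ℂ) ^ (-(i : ℤ))) ^ (m * k ^ (r - i - 1)) * F s)
      (𝓝[≠] ((q : ℂ) ^ (-(i : ℤ)))) (𝓝 c) := by
  have order_g := (meromorphicOrderAt_eq_neg_natCast_iff (hg 1 (by simp))).mpr hg_pole
  have order_F := meromorphicOrderAt_continuation_zpow_neg hq hf hf_ne hg hfg hg_reg hF hFf hi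
  refine (meromorphicOrderAt_eq_neg_natCast_iff (hF _ (one_div_pow_lt_re_zpow_neg hq hi))).mp ?_
  rw [order_F, order_g, ← WithTop.coe_natCast, ← WithTop.coe_mul]
  congr 1
  push_cast
  ring

end FunctionalEquation

/-- Let `q ≥ 2`, `f` nonvanishing holomorphic on `{Re s > 1}`, `g` meromorphic on `ℂ` with
`f(s)^q = f(qs)·g(s)` for `Re s > 1`.  Assume `g` is holomorphic and nonvanishing on
`{Re s > 1}`, has a pole of order `q - 1` at `s = 1`, and is holomorphic and nonvanishing at
`s = q^(-l)` for every `l ≥ 1`.  Then for every `r ≥ 1` the meromorphic continuation `F_r` of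
`f^(q^r)` to `{Re s > 1/q^r}` has a pole of order `(q-1)·q^(r-i-1)` at `s = q^(-i)` for each
`0 ≤ i ≤ r - 1`. -/
theorem continuation_pole_orders (q : ℕ) (hq : 2 ≤ q) (f g : ℂ → ℂ)
    (hf_holo : DifferentiableOn ℂ f {s : ℂ | 1 < s.re})
    (hf_ne : ∀ s : ℂ, 1 < s.re → f s ≠ 0)
    (hg : MeromorphicOn g Set.univ)
    (hfg : ∀ s : ℂ, 1 < s.re → f s ^ q = f ((q : ℂ) * s) * g s)
    (hg_holo : DifferentiableOn ℂ g {s : ℂ | 1 < s.re})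
    (hg_ne : ∀ s : ℂ, 1 < s.re → g s ≠ 0)
    (hg_pole : ∃ c : ℂ, c ≠ 0 ∧
      Tendsto (fun s : ℂ => (s - 1) ^ (q - 1) * g s) (𝓝[≠] 1) (𝓝 c))
    (hg_reg : ∀ l : ℕ, 1 ≤ l →
      AnalyticAt ℂ g ((q : ℂ) ^ (-(l : ℤ))) ∧ g ((q : ℂ) ^ (-(l : ℤ))) ≠ 0)
    (r : ℕ) (hr : 1 ≤ r)
    (F : ℂ → ℂ) (hF : MeromorphicOn F {s : ℂ | 1 / (q : ℝ) ^ r < s.re})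
    (hFf : ∀ s : ℂ, 1 < s.re → F s = f s ^ (q ^ r)) :
    ∀ i : ℕ, i ≤ r - 1 → ∃ c : ℂ, c ≠ 0 ∧
      Tendsto (fun s : ℂ => (s - (q : ℂ) ^ (-(i : ℤ))) ^ ((q - 1) * q ^ (r - i - 1)) * F s)
        (𝓝[≠] ((q : ℂ) ^ (-(i : ℤ)))) (𝓝 c) := by
  have g_order_zero (l : ℕ) (hl : 1 ≤ l) : meromorphicOrderAt g (((q : ℝ) : ℂ) ^ (-(l : ℤ))) = 0 :=
    (hg_reg l hl).1.meromorphicNFAt.meromorphicOrderAt_eq_zero_iff.mpr (hg_reg l hl).2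
  exact fun i hi ↦ continuation_pole_orders_general (q := q) (mod_cast hq) hf_holo hf_ne
    (hg.mono_set (Set.subset_univ _)) hfg hg_pole g_order_zero hF hFf (by omega)
end
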